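/- Let A : ℝ² → ℂ^{2×2} be smooth, Λ-periodic, and R-equivariant, i.e. A(Rᵀx) = Rᵀ·A(x)·R for all x ∈ ℝ². Let Φ₁ : ℝ² → ℂ be smooth, K-pseudo-periodic, and satisfy Φ₁(Rᵀx) = τ·Φ₁(x) for all x, and define Φ₂(x) = conj(Φ₁(−x)). Then the vector c = ∫_Ω conj(Φ₁(x))·(𝒜Φ₂)(x) dx ∈ ℂ² satisfies c₂ = i·c₁ (so c = v·(1, i) with v = c₁). -/

import Mathlib

/-!
The integrand `G = conj Φ₁ · 𝒜Φ₂` is Λ-periodic, since `Φ₁` and `Φ₂` pick up the same unimodular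
phase under translation by a lattice vector. Since `Φ₂(Rᵀx) = τ̄ Φ₂(x)`, the chain rule and the
equivariance of `A` give `(𝒜Φ₂)(Rᵀx) = τ̄ Rᵀ(𝒜Φ₂)(x)` (`calA_rot`), hence
`G(Rᵀx) = τ̄² Rᵀ G(x) = τ Rᵀ G(x)`.

The rotation preserves the integral of a Λ-periodic function over the cell
(`integral_cell_Rt`): in lattice coordinates it is `(θ₁, θ₂) ↦ (θ₂, -θ₁ - θ₂)`, and the inner
integral of a 1-periodic function over a period is unaffected by reflection and translation.
Therefore `c = τ Rᵀ c`, i.e. `R c = τ c`, and the `τ`-eigenspace of `R` is spanned by `(1, i)`.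
-/

noncomputable section

open MeasureTheory

/-- Points of the plane. -/
abbrev Vec : Type := Fin 2 → ℝ

/-- Standard dot product on ℝ². -/
def dot (x y : Vec) : ℝ := x 0 * y 0 + x 1 * y 1

/-- Lattice vector v₁. -/
def latv₁ : Vec := ![Real.sqrt 3 / 2, 1 / 2]

/-- Lattice vector v₂. -/
def latv₂ : Vec := ![Real.sqrt 3 / 2, -(1 / 2)]

/-- The triangular lattice Λ = ℤv₁ ⊕ ℤv₂. -/
def TriLat : Set Vec := {v | ∃ m₁ m₂ : ℤ, v = (m₁ : ℝ) • latv₁ + (m₂ : ℝ) • latv₂}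

/-- The fundamental cell Ω. -/
def cellΩ : Set Vec :=
  {x | ∃ θ₁ ∈ Set.Icc (0:ℝ) 1, ∃ θ₂ ∈ Set.Icc (0:ℝ) 1, x = θ₁ • latv₁ + θ₂ • latv₂}

/-- Dual lattice vector k₁. -/
def dualk₁ : Vec := (4 * Real.sqrt 3 * Real.pi / 3) • ![1 / 2, Real.sqrt 3 / 2]

/-- Dual lattice vector k₂. -/
def dualk₂ : Vec := (4 * Real.sqrt 3 * Real.pi / 3) • ![1 / 2, -(Real.sqrt 3 / 2)]

/-- The high-symmetry point K = (k₁ − k₂)/3. -/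
def Kpt : Vec := (3:ℝ)⁻¹ • (dualk₁ - dualk₂)

/-- `f` is K-pseudo-periodic: f(x+v) = e^{iK·v} f(x) for all x and all v ∈ Λ. -/
def PseudoPeriodic (f : Vec → ℂ) : Prop :=
  ∀ x : Vec, ∀ v ∈ TriLat, f (x + v) = Complex.exp (Complex.I * (dot Kpt v : ℂ)) * f x

/-- The partial derivative ∂ᵢ of a ℂ-valued function on ℝ². -/
def pd (i : Fin 2) (f : Vec → ℂ) : Vec → ℂ := fun x => fderiv ℝ f x (Pi.single i 1)

/-- The Pauli matrix σ₂. -/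
def σ₂ : Matrix (Fin 2) (Fin 2) ℂ := !![0, -Complex.I; Complex.I, 0]

/-- The second order operator L^M φ = −∇·(M∇φ). -/
def LM (M : Vec → Matrix (Fin 2) (Fin 2) ℂ) (φ : Vec → ℂ) : Vec → ℂ :=
  fun x => -(∑ i : Fin 2, pd i (fun y => ∑ j : Fin 2, M y i j * pd j φ y) x)

/-- The clockwise 2π/3 rotation matrix R. -/
def Rrot : Matrix (Fin 2) (Fin 2) ℝ :=
  !![-(1 / 2), Real.sqrt 3 / 2; -(Real.sqrt 3 / 2), -(1 / 2)]

/-- The action x ↦ Rᵀx. -/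
def Rt (x : Vec) : Vec := Rrot.transpose.mulVec x

/-- τ = e^{2πi/3}. -/
def τ : ℂ := Complex.exp (2 * Real.pi * Complex.I / 3)

/-- The first order operator 𝒜, componentwise:
(𝒜φ)ⱼ = (1/i)(Σₖ Aⱼₖ ∂ₖφ + Σᵢ ∂ᵢ(Aᵢⱼ φ)). -/
def calA (A : Vec → Matrix (Fin 2) (Fin 2) ℂ) (φ : Vec → ℂ) (j : Fin 2) : Vec → ℂ :=
  fun x => Complex.I⁻¹ *
    ((∑ k : Fin 2, A x j k * pd k φ x) + ∑ i : Fin 2, pd i (fun y => A y i j * φ y) x)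


/-! ### Invariance of the cell integral under the rotation -/

lemma sqrt_three_sq : Real.sqrt 3 ^ 2 = 3 := Real.sq_sqrt (by norm_num)

/-- Lattice coordinates `θ ↦ θ₁v₁ + θ₂v₂`. -/
def coordMap : Vec →L[ℝ] Vec :=
  (ContinuousLinearMap.proj (R := ℝ) (φ := fun _ : Fin 2 => ℝ) 0).smulRight latv₁ +
    (ContinuousLinearMap.proj (R := ℝ) (φ := fun _ : Fin 2 => ℝ) 1).smulRight latv₂

lemma coordMap_apply (θ : Vec) : coordMap θ = θ 0 • latv₁ + θ 1 • latv₂ := by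
  simp [coordMap]

lemma coordMap_injective : Function.Injective coordMap := by
  intro a b h
  have h3 : (0:ℝ) < Real.sqrt 3 := by positivity
  have h0 := congrFun h 0
  have h1 := congrFun h 1
  simp [coordMap_apply, latv₁, latv₂] at h0 h1
  have e : a 0 + a 1 = b 0 + b 1 := by
    have : Real.sqrt 3 * (a 0 + a 1 - (b 0 + b 1)) = 0 := by linear_combination 2 * h0
    rcases mul_eq_zero.1 this with h | h
    · exact absurd h h3.ne'
    · linarith
  ext i
  fin_cases i
  · simp; linarith
  · simp; linarith

lemma cell_eq_image : cellΩ = coordMap '' Set.Icc 0 1 := by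
  ext x
  constructor
  · rintro ⟨a, ha, b, hb, rfl⟩
    refine ⟨![a, b], ⟨?_, ?_⟩, by simp [coordMap_apply]⟩
    · intro i; fin_cases i
      · exact ha.1
      · exact hb.1
    · intro i; fin_cases i
      · exact ha.2
      · exact hb.2
  · rintro ⟨θ, hθ, rfl⟩
    exact ⟨θ 0, ⟨hθ.1 0, hθ.2 0⟩, θ 1, ⟨hθ.1 1, hθ.2 1⟩, coordMap_apply θ⟩

/-- The Jacobian determinant is left unevaluated: only its independence of `G` matters. -/
lemma integral_cell (G : Vec → ℂ) (hG : Continuous G) :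
    ∫ x in cellΩ, G x =
      |coordMap.det| • ∫ b in (0:ℝ)..1, ∫ a in (0:ℝ)..1, G (a • latv₁ + b • latv₂) := by
  rw [cell_eq_image, integral_image_eq_integral_abs_det_fderiv_smul volume measurableSet_Icc
    (fun x _ => coordMap.hasFDerivWithinAt) coordMap_injective.injOn, integral_smul]
  congr 1
  have hpre : (Set.Icc 0 1 : Set Vec) =
      (MeasurableEquiv.finTwoArrow : Vec ≃ᵐ ℝ × ℝ) ⁻¹' (Set.Icc 0 1 ×ˢ Set.Icc 0 1) := by
    ext θ
    simp [Set.mem_Icc, Pi.le_def, Fin.forall_fin_two]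
  have key := (volume_preserving_finTwoArrow ℝ).setIntegral_preimage_emb
    MeasurableEquiv.finTwoArrow.measurableEmbedding
    (fun p : ℝ × ℝ => G (p.1 • latv₁ + p.2 • latv₂)) (Set.Icc 0 1 ×ˢ Set.Icc 0 1)
  rw [hpre]
  simp only [coordMap_apply]
  refine Eq.trans key ?_
  have hc : Continuous (fun p : ℝ × ℝ => G (p.1 • latv₁ + p.2 • latv₂)) := by fun_prop
  rw [Measure.volume_eq_prod, ← Measure.prod_restrict, integral_prod_symm]
  · simp only [intervalIntegral.integral_of_le zero_le_one, integral_Icc_eq_integral_Ioc]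
  · rw [Measure.prod_restrict, ← Measure.volume_eq_prod]
    exact hc.continuousOn.integrableOn_compact (isCompact_Icc.prod isCompact_Icc)

lemma integral_cell' (G : Vec → ℂ) (hG : Continuous G) :
    ∫ x in cellΩ, G x =
      |coordMap.det| • ∫ a in (0:ℝ)..1, ∫ b in (0:ℝ)..1, G (a • latv₁ + b • latv₂) := by
  rw [integral_cell G hG, intervalIntegral.integral_of_le zero_le_one,
    ← intervalIntegral_integral_swap]
  · simp only [intervalIntegral.integral_of_le zero_le_one]
  · have hc : Continuous (fun p : ℝ × ℝ => G (p.1 • latv₁ + p.2 • latv₂)) := by fun_prop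
    rw [Set.uIoc_of_le zero_le_one, Measure.prod_restrict, ← Measure.volume_eq_prod]
    exact (hc.continuousOn.integrableOn_compact (isCompact_Icc.prod isCompact_Icc)).mono_set
      (Set.prod_mono Set.Ioc_subset_Icc_self Set.Ioc_subset_Icc_self)

lemma Rt_coord (a b : ℝ) :
    Rt (a • latv₁ + b • latv₂) = b • latv₁ + (-a - b) • latv₂ := by
  have h3 := sqrt_three_sq
  ext i
  fin_cases i
  · simp [Rt, Rrot, latv₁, latv₂, Matrix.mulVec, dotProduct, Fin.sum_univ_two]
    linear_combination (0:ℝ) * h3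
  · simp [Rt, Rrot, latv₁, latv₂, Matrix.mulVec, dotProduct, Fin.sum_univ_two]
    linear_combination (1/4 * a + 1/4 * b) * h3

/-- `Rt` as a continuous linear map. -/
def RtL : Vec →L[ℝ] Vec := LinearMap.toContinuousLinearMap (Matrix.mulVecLin Rrot.transpose)

lemma RtL_apply (x : Vec) : RtL x = Rt x := rfl

lemma continuous_Rt : Continuous Rt := RtL.continuous

lemma integral_cell_Rt (G : Vec → ℂ) (hG : Continuous G)
    (hper : ∀ x : Vec, ∀ v ∈ TriLat, G (x + v) = G x) :
    ∫ x in cellΩ, G (Rt x) = ∫ x in cellΩ, G x := by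
  rw [integral_cell (fun x => G (Rt x)) (hG.comp continuous_Rt), integral_cell' G hG]
  congr 1
  refine intervalIntegral.integral_congr fun b _ => ?_
  simp only [Rt_coord]
  have hp : Function.Periodic (fun s : ℝ => G (b • latv₁ + s • latv₂)) 1 := by
    intro s
    have := hper (b • latv₁ + s • latv₂) latv₂ ⟨0, 1, by simp⟩
    simp only [← this, add_smul, one_smul, add_assoc]
  have h1 : ∫ a in (0:ℝ)..1, G (b • latv₁ + (-a - b) • latv₂) =
      ∫ s in (-b - 1)..(-b - 1 + 1), G (b • latv₁ + s • latv₂) := by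
    have := intervalIntegral.integral_comp_sub_left (a := 0) (b := 1)
      (fun s : ℝ => G (b • latv₁ + s • latv₂)) (-b)
    rw [show (-b - 1 + 1 : ℝ) = -b - 0 by ring, ← this]
    refine intervalIntegral.integral_congr fun a _ => ?_
    simp only [show -a - b = -b - a by ring]
  rw [h1, hp.intervalIntegral_add_eq (-b - 1) 0, zero_add]

/-! ### Behaviour of the derivatives and of the operator under symmetries -/

lemma pd_const_mul (i : Fin 2) (κ : ℂ) {f : Vec → ℂ} (hf : Differentiable ℝ f) (x : Vec) :
    pd i (fun y => κ * f y) x = κ * pd i f x := by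
  simp [pd, fderiv_const_mul (hf x)]

lemma pd_sum_sum (i : Fin 2) (C : Fin 2 → Fin 2 → ℂ) {F : Fin 2 → Fin 2 → Vec → ℂ}
    (hF : ∀ a b, Differentiable ℝ (F a b)) (x : Vec) :
    pd i (fun y => ∑ a, ∑ b, C a b * F a b y) x = ∑ a, ∑ b, C a b * pd i (F a b) x := by
  have h : HasFDerivAt (fun y => ∑ a, ∑ b, C a b * F a b y)
      (∑ a, ∑ b, C a b • fderiv ℝ (F a b) x) x :=
    HasFDerivAt.fun_sum fun a _ => HasFDerivAt.fun_sum fun b _ =>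
      ((hF a b x).hasFDerivAt.const_mul (C a b))
  simp only [pd, h.fderiv]
  simp

lemma pd_translate (i : Fin 2) {f : Vec → ℂ} (hf : Differentiable ℝ f) {v : Vec} {e : ℂ}
    (h : ∀ x, f (x + v) = e * f x) (x : Vec) : pd i f (x + v) = e * pd i f x := by
  rw [← pd_const_mul i e hf, ← funext h]
  simp [pd, fderiv_comp_add_right]

/-- Chain rule solved for the gradient at the rotated point, by orthogonality of `R`. -/
lemma pd_Rt (m : Fin 2) {f : Vec → ℂ} (hf : Differentiable ℝ f) (x : Vec) :
    pd m f (Rt x) = ∑ k, (Rrot k m : ℂ) * pd k (fun y => f (Rt y)) x := by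
  have hd : fderiv ℝ (fun y => f (Rt y)) x = (fderiv ℝ f (Rt x)).comp RtL :=
    ((hf (Rt x)).hasFDerivAt.comp x RtL.hasFDerivAt).fderiv
  have hs : (Pi.single m 1 : Vec) = ∑ k, Rrot k m • Rt (Pi.single k 1) := by
    have h3 := sqrt_three_sq
    ext i
    fin_cases m <;> fin_cases i <;>
      simp [Rt, Rrot, Fin.sum_univ_two] <;>
      linarith
  simp only [pd, hd]
  rw [hs, map_sum]
  simp [RtL_apply]

lemma calA_translate {A : Vec → Matrix (Fin 2) (Fin 2) ℂ} {φ : Vec → ℂ}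
    (hA : ∀ i j, Differentiable ℝ fun x => A x i j) (hφ : Differentiable ℝ φ) {v : Vec} {e : ℂ}
    (hAv : ∀ x, A (x + v) = A x) (hφv : ∀ x, φ (x + v) = e * φ x) (j : Fin 2) (x : Vec) :
    calA A φ j (x + v) = e * calA A φ j x := by
  have h1 : ∀ k, pd k φ (x + v) = e * pd k φ x := fun k => pd_translate k hφ hφv x
  have h2 : ∀ i, pd i (fun y => A y i j * φ y) (x + v) = e * pd i (fun y => A y i j * φ y) x :=
    fun i => pd_translate i ((hA i j).fun_mul hφ) (fun y => by rw [hAv, hφv]; ring) x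
  simp only [calA, h1, h2, hAv, Fin.sum_univ_two]
  ring

/-- `𝒜` intertwines the rotation: if `φ(Rᵀx) = κφ(x)`, then `(𝒜φ)(Rᵀx) = κ Rᵀ(𝒜φ)(x)`. -/
lemma calA_rot {A : Vec → Matrix (Fin 2) (Fin 2) ℂ} {φ : Vec → ℂ}
    (hA : ∀ i j, Differentiable ℝ fun x => A x i j) (hφ : Differentiable ℝ φ) {κ : ℂ}
    (hA_rot : ∀ x : Vec,
      A (Rt x) = (Rrot.map (Complex.ofReal)).transpose * A x * Rrot.map (Complex.ofReal))
    (hφ_rot : ∀ x, φ (Rt x) = κ * φ x) (j : Fin 2) (x : Vec) :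
    calA A φ j (Rt x) = κ * ∑ l, (Rrot l j : ℂ) * calA A φ l x := by
  have hAe : ∀ y i j, A (Rt y) i j = ∑ a, ∑ b, (Rrot a i * Rrot b j : ℂ) * A y a b := by
    intro y i j
    rw [hA_rot]
    simp only [Matrix.mul_apply, Matrix.transpose_apply, Matrix.map_apply, Fin.sum_univ_two]
    ring
  have h1 : ∀ k, pd k φ (Rt x) = ∑ l, (Rrot l k : ℂ) * (κ * pd l φ x) := by
    intro k
    rw [pd_Rt k hφ]
    simp only [hφ_rot, pd_const_mul _ κ hφ]
  have h2 : ∀ i, pd i (fun y => A y i j * φ y) (Rt x) = ∑ k, (Rrot k i : ℂ) *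
      ∑ a, ∑ b, (κ * Rrot a i * Rrot b j : ℂ) * pd k (fun y => A y a b * φ y) x := by
    intro i
    rw [pd_Rt i ((hA i j).fun_mul hφ)]
    refine Finset.sum_congr rfl fun k _ => ?_
    rw [← pd_sum_sum k (fun a b => (κ * Rrot a i * Rrot b j : ℂ))
      (F := fun a b y => A y a b * φ y) (fun a b => (hA a b).fun_mul hφ)]
    congr 2
    ext y
    rw [hAe, hφ_rot]
    simp only [Fin.sum_univ_two]
    ring
  have h3 : ((Real.sqrt 3 : ℝ) : ℂ) ^ 2 = 3 := by exact_mod_cast sqrt_three_sq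
  simp only [calA, h1, h2, hAe, Fin.sum_univ_two]
  -- The residual factor is `R Rᵀ = 1`, i.e. `(√3)² / 4 + 1 / 4 = 1`.
  fin_cases j <;> simp [Rrot]
  · linear_combination (-Complex.I * κ / 4 * (-1 / 2 * (A x 0 0 * pd 0 φ x + A x 0 1 * pd 1 φ x +
        pd 0 (fun y => A y 0 0 * φ y) x + pd 1 (fun y => A y 1 0 * φ y) x) -
        Real.sqrt 3 / 2 * (A x 1 0 * pd 0 φ x + A x 1 1 * pd 1 φ x +
        pd 0 (fun y => A y 0 1 * φ y) x + pd 1 (fun y => A y 1 1 * φ y) x))) * h3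
  · linear_combination (-Complex.I * κ / 4 * (Real.sqrt 3 / 2 * (A x 0 0 * pd 0 φ x + A x 0 1 * pd 1 φ x +
        pd 0 (fun y => A y 0 0 * φ y) x + pd 1 (fun y => A y 1 0 * φ y) x) -
        1 / 2 * (A x 1 0 * pd 0 φ x + A x 1 1 * pd 1 φ x +
        pd 0 (fun y => A y 0 1 * φ y) x + pd 1 (fun y => A y 1 1 * φ y) x))) * h3

lemma continuous_pd (i : Fin 2) {f : Vec → ℂ} (hf : ContDiff ℝ (⊤ : ℕ∞) f) :
    Continuous (pd i f) :=
  (hf.continuous_fderiv (by simp)).clm_apply continuous_const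

lemma τ_eq : τ = -1 / 2 + (Real.sqrt 3 / 2 : ℝ) * Complex.I := by
  have h : (2 * Real.pi * Complex.I / 3 : ℂ) = ((2 * Real.pi / 3 : ℝ) : ℂ) * Complex.I := by
    push_cast; ring
  have e : 2 * Real.pi / 3 = Real.pi - Real.pi / 3 := by ring
  rw [τ, h, Complex.exp_mul_I, ← Complex.ofReal_cos, ← Complex.ofReal_sin, e, Real.cos_pi_sub,
    Real.sin_pi_sub, Real.cos_pi_div_three, Real.sin_pi_div_three]
  push_cast; ring

/-- For A smooth, Λ-periodic, R-equivariant, Φ₁ smooth,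
K-pseudo-periodic with Φ₁(Rᵀx) = τΦ₁(x), and Φ₂(x) = conj(Φ₁(−x)),
the vector c = ∫_Ω conj(Φ₁)·(𝒜Φ₂) dx satisfies c₂ = i·c₁. -/
theorem stmt3 (A : Vec → Matrix (Fin 2) (Fin 2) ℂ)
    (hA_smooth : ∀ i j : Fin 2, ContDiff ℝ (⊤ : ℕ∞) fun x => A x i j)
    (hA_per : ∀ x : Vec, ∀ v ∈ TriLat, A (x + v) = A x)
    (hA_rot : ∀ x : Vec,
      A (Rt x) = (Rrot.map (Complex.ofReal)).transpose * A x * Rrot.map (Complex.ofReal))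
    (Φ₁ : Vec → ℂ) (hΦ₁_smooth : ContDiff ℝ (⊤ : ℕ∞) Φ₁) (hΦ₁_pp : PseudoPeriodic Φ₁)
    (hΦ₁_rot : ∀ x : Vec, Φ₁ (Rt x) = τ * Φ₁ x)
    (Φ₂ : Vec → ℂ) (hΦ₂ : ∀ x, Φ₂ x = (starRingEnd ℂ) (Φ₁ (-x)))
    (c : Fin 2 → ℂ)
    (hc : ∀ j : Fin 2, c j = ∫ x in cellΩ, (starRingEnd ℂ) (Φ₁ x) * calA A Φ₂ j x) :
    c 1 = Complex.I * c 0 := by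

  have hAd : ∀ i j, Differentiable ℝ fun x => A x i j :=
    fun i j => (hA_smooth i j).differentiable (by simp)
  have hΦ₂s : ContDiff ℝ (⊤ : ℕ∞) Φ₂ := by
    rw [funext hΦ₂]
    exact Complex.conjCLE.contDiff.comp (hΦ₁_smooth.comp contDiff_neg)
  have hΦ₂d : Differentiable ℝ Φ₂ := hΦ₂s.differentiable (by simp)
  have hRneg : ∀ x, Rt (-x) = -Rt x := fun x => Matrix.mulVec_neg _ _
  have hΦ₂r : ∀ x, Φ₂ (Rt x) = (starRingEnd ℂ) τ * Φ₂ x := by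
    intro x
    rw [hΦ₂, hΦ₂, ← hRneg, hΦ₁_rot, map_mul]
  have hphase : ∀ v : Vec, (starRingEnd ℂ) (Complex.exp (Complex.I * (dot Kpt v : ℂ))) =
      Complex.exp (-(Complex.I * (dot Kpt v : ℂ))) := by
    intro v
    rw [← Complex.exp_conj, map_mul, Complex.conj_I, Complex.conj_ofReal, neg_mul]
  have hΦ₂p : ∀ v ∈ TriLat, ∀ x,
      Φ₂ (x + v) = Complex.exp (Complex.I * (dot Kpt v : ℂ)) * Φ₂ x := by
    intro v hv x
    have hx := hΦ₁_pp (-(x + v)) v hv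
    rw [show -(x + v) + v = -x by abel] at hx
    rw [hΦ₂, hΦ₂, hx, map_mul, hphase, ← mul_assoc, ← Complex.exp_add, add_neg_cancel,
      Complex.exp_zero, one_mul]
  let G : Fin 2 → Vec → ℂ := fun j x => (starRingEnd ℂ) (Φ₁ x) * calA A Φ₂ j x
  have hGc : ∀ j, Continuous (G j) := by
    intro j
    have c1 : ∀ k, Continuous (pd k Φ₂) := fun k => continuous_pd k hΦ₂s
    have c2 : ∀ i, Continuous (pd i (fun y => A y i j * Φ₂ y)) :=
      fun i => continuous_pd i ((hA_smooth i j).mul hΦ₂s)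
    have c3 : ∀ k, Continuous (fun x => A x j k) := fun k => (hA_smooth j k).continuous
    refine (Complex.continuous_conj.comp hΦ₁_smooth.continuous).mul (continuous_const.mul ?_)
    exact (continuous_finsetSum _ fun k _ => (c3 k).mul (c1 k)).add
      (continuous_finsetSum _ fun i _ => c2 i)
  have hGp : ∀ j, ∀ x : Vec, ∀ v ∈ TriLat, G j (x + v) = G j x := by
    intro j x v hv
    simp only [G]
    rw [hΦ₁_pp x v hv, calA_translate hAd hΦ₂d (fun x => hA_per x v hv) (hΦ₂p v hv), map_mul,
      hphase]
    have := Complex.exp_add (-(Complex.I * (dot Kpt v : ℂ))) (Complex.I * (dot Kpt v : ℂ))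
    rw [neg_add_cancel, Complex.exp_zero] at this
    linear_combination (-(starRingEnd ℂ) (Φ₁ x) * calA A Φ₂ j x) * this
  have h3 : ((Real.sqrt 3 : ℝ) : ℂ) ^ 2 = 3 := by exact_mod_cast sqrt_three_sq
  have hτ : (starRingEnd ℂ) τ * (starRingEnd ℂ) τ = τ := by
    rw [τ_eq]
    simp only [map_add, map_mul, map_div₀, map_neg, map_one, Complex.conj_I, Complex.conj_ofReal,
      map_ofNat]
    push_cast
    linear_combination (1/4 * Complex.I ^ 2) * h3 + (3/4 : ℂ) * Complex.I_sq
  have hGr : ∀ j x, G j (Rt x) = ∑ l, (τ * Rrot l j) * G l x := by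
    intro j x
    simp only [G]
    rw [hΦ₁_rot, calA_rot hAd hΦ₂d hA_rot hΦ₂r, map_mul]
    conv_rhs => rw [← hτ]
    simp only [Fin.sum_univ_two]
    ring
  have hcell : IsCompact cellΩ := by
    rw [cell_eq_image]
    exact isCompact_Icc.image coordMap.continuous
  have hcr : ∀ j, c j = ∑ l, (τ * Rrot l j) * c l := by
    intro j
    simp only [hc]
    change ∫ x in cellΩ, G j x = ∑ l, (τ * Rrot l j) * ∫ x in cellΩ, G l x
    rw [← integral_cell_Rt (G j) (hGc j) (hGp j)]
    simp only [hGr, ← integral_const_mul]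
    exact integral_finsetSum _ fun l _ =>
      ((hGc l).continuousOn.integrableOn_compact hcell).const_mul _
  -- The second row of `c = τ Rᵀ c` reads `w (c₂ - i c₁) = 0` with `w = (3 + √3 i) / 4`; the
  -- multiplier below is `w⁻¹`.
  have e1 := hcr 1
  rw [τ_eq] at e1
  simp [Fin.sum_univ_two, Rrot] at e1
  linear_combination (1 - Real.sqrt 3 * Complex.I / 3) * e1 +
    (Complex.I ^ 2 / 12 * c 1 + (Complex.I / 3 - Real.sqrt 3 * Complex.I ^ 2 / 12) * c 0) * h3 +
    (c 1 / 4 - Real.sqrt 3 / 4 * c 0) * Complex.I_sq
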